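/- arXiv:2106.11514 — 2 statements merged into one kernel-verified Lean document; each statement's English description precedes it below -/
import Mathlib

section
/- Let g_1, …, g_T ∈ ℝ^d, let 0 < β_{1,t} ≤ β_1 < 1 for all t, β_2 ∈ (0,1), ε ≥ 0, and let m_t, v_t be the AdaMomentum recursions m_0 = 0, v_0 = 0, m_t = β_{1,t} m_{t−1} + (1−β_{1,t}) g_t, v_t = β_2 v_{t−1} + (1−β_2) m_t² + ε (elementwise). Assume γ := β_1/√β_2 < 1. Then for every coordinate i, Σ_{t=1}^T m_{t,i}² / √(t · v_{t,i}) ≤ (√(1 + log T) / ((1−β_1)² (1−γ) √(1−β_2))) · √(Σ_{t=1}^T g_{t,i}²), where terms with v_{t,i} = 0 are interpreted as 0. -/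
/-!
Since `v t` dominates `(1 - β₂) ‖m t‖²`, each summand is at most `(1 - β₂)^(-1/2) ‖m t‖ / √t`, and
Cauchy–Schwarz against the harmonic sum leaves the factor `√(1 + log T)` times the `ℓ²` norm of `m`.
Convexity of `‖·‖²` gives `‖m (t + 1)‖² ≤ β₁ ‖m t‖² + ‖g (t + 1)‖²`; summing over `t`, the `ℓ²` norm
of `m` is at most `(1 - β₁)^(-1/2)` times that of `g`. This constant, which does not involve `γ`, is
at most `1 / ((1 - β₁)² (1 - γ))`.
-/

section Recursions

variable {R : Type*} [CommRing R] [LinearOrder R] [IsStrictOrderedRing R]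

theorem one_sub_mul_sum_Icc_le_of_le_mul_add {a b : ℕ → R} {β : R} (hβ : 0 ≤ β)
    (ha : ∀ t, 0 ≤ a t) (ha0 : a 0 = 0) (hab : ∀ t, a (t + 1) ≤ β * a t + b (t + 1)) (n : ℕ) :
    (1 - β) * ∑ t ∈ Finset.Icc 1 n, a t ≤ ∑ t ∈ Finset.Icc 1 n, b t := by
  have telescoped : (1 - β) * ∑ t ∈ Finset.Icc 1 n, a t + β * a n ≤ ∑ t ∈ Finset.Icc 1 n, b t := by
    induction n with
    | zero => simp [ha0]
    | succ n ih =>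
      rw [Finset.sum_Icc_succ_top (by lia), Finset.sum_Icc_succ_top (by lia)]
      linarith [hab n]
  exact (le_add_of_nonneg_right (mul_nonneg hβ (ha n))).trans telescoped

variable {u v : ℕ → R} {β ε : R}

theorem nonneg_of_moving_average (hβ₀ : 0 ≤ β) (hβ₁ : β ≤ 1) (hε : 0 ≤ ε) (hu : ∀ t, 0 ≤ u t)
    (hv0 : 0 ≤ v 0) (hv : ∀ t, v (t + 1) = β * v t + (1 - β) * u (t + 1) + ε) (t : ℕ) :
    0 ≤ v t := by
  induction t with
  | zero => exact hv0
  | succ t ih =>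
    rw [hv]
    exact add_nonneg (add_nonneg (mul_nonneg hβ₀ ih) (mul_nonneg (sub_nonneg.2 hβ₁) (hu _))) hε

theorem one_sub_mul_le_moving_average (hβ₀ : 0 ≤ β) (hβ₁ : β ≤ 1) (hε : 0 ≤ ε)
    (hu : ∀ t, 0 ≤ u t) (hv0 : 0 ≤ v 0)
    (hv : ∀ t, v (t + 1) = β * v t + (1 - β) * u (t + 1) + ε) {t : ℕ} (ht : 1 ≤ t) :
    (1 - β) * u t ≤ v t := by
  obtain ⟨s, rfl⟩ := Nat.exists_eq_add_of_le' ht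
  have decayed_nonneg : 0 ≤ β * v s :=
    mul_nonneg hβ₀ (nonneg_of_moving_average hβ₀ hβ₁ hε hu hv0 hv s)
  linarith [hv s]

end Recursions

section Momentum

variable {E : Type*} [SeminormedAddCommGroup E] [NormedSpace ℝ E]

theorem norm_sq_convex_combination_le {b : ℝ} (hb₀ : 0 ≤ b) (hb₁ : b ≤ 1) (x y : E) :
    ‖b • x + (1 - b) • y‖ ^ 2 ≤ b * ‖x‖ ^ 2 + (1 - b) * ‖y‖ ^ 2 :=
  (convexOn_univ_norm.pow (fun _ _ => norm_nonneg _) 2).2 (Set.mem_univ x) (Set.mem_univ y)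
    hb₀ (sub_nonneg.2 hb₁) (add_sub_cancel b 1)

theorem one_sub_mul_sum_norm_sq_momentum_le {g m : ℕ → E} {b : ℕ → ℝ} {β : ℝ}
    (hb : ∀ t, 1 ≤ t → 0 ≤ b t ∧ b t ≤ β) (hβ : β ≤ 1) (hm0 : m 0 = 0)
    (hm : ∀ t, m (t + 1) = b (t + 1) • m t + (1 - b (t + 1)) • g (t + 1)) (n : ℕ) :
    (1 - β) * ∑ t ∈ Finset.Icc 1 n, ‖m t‖ ^ 2 ≤ ∑ t ∈ Finset.Icc 1 n, ‖g t‖ ^ 2 := by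
  have hβ₀ : 0 ≤ β := (hb 1 le_rfl).1.trans (hb 1 le_rfl).2
  refine one_sub_mul_sum_Icc_le_of_le_mul_add hβ₀ (fun t => sq_nonneg _) (by simp [hm0])
    (fun t => ?_) n
  obtain ⟨hb₀, hbβ⟩ := hb (t + 1) (by lia)
  calc ‖m (t + 1)‖ ^ 2
      ≤ b (t + 1) * ‖m t‖ ^ 2 + (1 - b (t + 1)) * ‖g (t + 1)‖ ^ 2 := by
        rw [hm]
        exact norm_sq_convex_combination_le hb₀ (hbβ.trans hβ) _ _
    _ ≤ β * ‖m t‖ ^ 2 + ‖g (t + 1)‖ ^ 2 := by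
        gcongr
        exact mul_le_of_le_one_left (sq_nonneg _) (sub_le_self 1 hb₀)

end Momentum

theorem sq_div_sqrt_le_div_sqrt {c x v : ℝ} (hc : 0 < c) (hx : 0 ≤ x) (hv : c * x ^ 2 ≤ v) :
    x ^ 2 / √v ≤ x / √c := by
  rcases hx.eq_or_lt with rfl | hx
  · simp
  have sqrt_mul_le : √c * x ≤ √v := by
    apply Real.le_sqrt_of_sq_le
    rwa [mul_pow, Real.sq_sqrt hc.le]
  calc x ^ 2 / √v
      ≤ x ^ 2 / (√c * x) := by gcongr
    _ = x / √c := by field_simp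

theorem sum_Icc_div_sqrt_le_sqrt_one_add_log_mul (a : ℕ → ℝ) (n : ℕ) :
    ∑ t ∈ Finset.Icc 1 n, a t / √t
      ≤ √(1 + Real.log n) * √(∑ t ∈ Finset.Icc 1 n, a t ^ 2) := by
  have harmonic_le : ∑ t ∈ Finset.Icc 1 n, (√t)⁻¹ ^ 2 ≤ 1 + Real.log n := by
    simpa [harmonic_eq_sum_Icc] using harmonic_le_one_add_log n
  calc ∑ t ∈ Finset.Icc 1 n, a t / √t
      = ∑ t ∈ Finset.Icc 1 n, (√t)⁻¹ * a t := by simp only [div_eq_inv_mul]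
    _ ≤ √(∑ t ∈ Finset.Icc 1 n, (√t)⁻¹ ^ 2) * √(∑ t ∈ Finset.Icc 1 n, a t ^ 2) :=
        Real.sum_mul_le_sqrt_mul_sqrt _ _ _
    _ ≤ √(1 + Real.log n) * √(∑ t ∈ Finset.Icc 1 n, a t ^ 2) := by gcongr

theorem sum_sq_div_sqrt_mul_le {a v : ℕ → ℝ} {c : ℝ} (hc : 0 < c) (ha : ∀ t, 0 ≤ a t) {n : ℕ}
    (hv : ∀ t ∈ Finset.Icc 1 n, c * a t ^ 2 ≤ v t) :
    ∑ t ∈ Finset.Icc 1 n, a t ^ 2 / √(t * v t)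
      ≤ √(1 + Real.log n) * √(∑ t ∈ Finset.Icc 1 n, a t ^ 2) / √c := by
  calc ∑ t ∈ Finset.Icc 1 n, a t ^ 2 / √(t * v t)
      = ∑ t ∈ Finset.Icc 1 n, a t ^ 2 / √(v t) / √t := by
        simp only [Real.sqrt_mul (Nat.cast_nonneg _), div_mul_eq_div_div_swap]
    _ ≤ ∑ t ∈ Finset.Icc 1 n, a t / √c / √t := by
        gcongr ∑ t ∈ _, ?_ / _ with t ht
        exact sq_div_sqrt_le_div_sqrt hc (ha t) (hv t ht)
    _ = (∑ t ∈ Finset.Icc 1 n, a t / √t) / √c := by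
        simp only [div_right_comm _ √c, Finset.sum_div]
    _ ≤ √(1 + Real.log n) * √(∑ t ∈ Finset.Icc 1 n, a t ^ 2) / √c := by
        gcongr
        exact sum_Icc_div_sqrt_le_sqrt_one_add_log_mul a n

theorem sq_mul_le_sqrt {x y : ℝ} (hx₀ : 0 ≤ x) (hx₁ : x ≤ 1) (hy : y ≤ 1) : x ^ 2 * y ≤ √x :=
  calc x ^ 2 * y
      ≤ x ^ 2 := mul_le_of_le_one_right (sq_nonneg x) hy
    _ ≤ x := pow_le_of_le_one hx₀ hx₁ two_ne_zero
    _ ≤ √x := Real.le_sqrt_self_iff.2 hx₁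

theorem div_sqrt_one_sub_mul_le_div_sq_mul {K β γ c : ℝ} (hK : 0 ≤ K) (hβ₀ : 0 ≤ β) (hβ₁ : β < 1)
    (hγ₀ : 0 ≤ γ) (hγ₁ : γ < 1) (hc : 0 < c) :
    K / (√(1 - β) * c) ≤ K / ((1 - β) ^ 2 * (1 - γ) * c) := by
  have denominator_pos : 0 < (1 - β) ^ 2 * (1 - γ) * c :=
    mul_pos (mul_pos (pow_pos (sub_pos.2 hβ₁) 2) (sub_pos.2 hγ₁)) hc
  refine div_le_div_of_nonneg_left hK denominator_pos (mul_le_mul_of_nonneg_right ?_ hc.le)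
  exact sq_mul_le_sqrt (sub_nonneg.2 hβ₁.le) (sub_le_self 1 hβ₀) (sub_le_self 1 hγ₀)

theorem adamomentum_key_sum_bound_general {E : Type*} [SeminormedAddCommGroup E] [NormedSpace ℝ E]
    (T : ℕ) {g m : ℕ → E} {v β1t : ℕ → ℝ} {β1 β2 ε : ℝ}
    (hβ1t : ∀ t, 1 ≤ t → 0 ≤ β1t t ∧ β1t t ≤ β1) (hβ1 : β1 < 1)
    (hβ2 : 0 ≤ β2 ∧ β2 < 1) (hε : 0 ≤ ε) (hm0 : m 0 = 0) (hv0 : v 0 = 0)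
    (hm : ∀ t, m (t + 1) = β1t (t + 1) • m t + (1 - β1t (t + 1)) • g (t + 1))
    (hv : ∀ t, v (t + 1) = β2 * v t + (1 - β2) * ‖m (t + 1)‖ ^ 2 + ε) :
    ∑ t ∈ Finset.Icc 1 T, ‖m t‖ ^ 2 / √(t * v t)
      ≤ √(1 + Real.log T) / (√(1 - β1) * √(1 - β2)) * √(∑ t ∈ Finset.Icc 1 T, ‖g t‖ ^ 2) := by
  have one_sub_β1_pos : 0 < 1 - β1 := sub_pos.2 hβ1
  have second_moment_ge (t : ℕ) (ht : t ∈ Finset.Icc 1 T) : (1 - β2) * ‖m t‖ ^ 2 ≤ v t :=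
    one_sub_mul_le_moving_average (u := fun t => ‖m t‖ ^ 2) hβ2.1 hβ2.2.le hε
      (fun _ => sq_nonneg _) hv0.ge hv (Finset.mem_Icc.1 ht).1
  have momentum_energy_le :
      ∑ t ∈ Finset.Icc 1 T, ‖m t‖ ^ 2 ≤ (∑ t ∈ Finset.Icc 1 T, ‖g t‖ ^ 2) / (1 - β1) :=
    (le_div_iff₀' one_sub_β1_pos).2
      (one_sub_mul_sum_norm_sq_momentum_le hβ1t hβ1.le hm0 hm T)
  calc ∑ t ∈ Finset.Icc 1 T, ‖m t‖ ^ 2 / √(t * v t)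
      ≤ √(1 + Real.log T) * √(∑ t ∈ Finset.Icc 1 T, ‖m t‖ ^ 2) / √(1 - β2) :=
        sum_sq_div_sqrt_mul_le (sub_pos.2 hβ2.2) (fun _ => norm_nonneg _) second_moment_ge
    _ ≤ √(1 + Real.log T) * √((∑ t ∈ Finset.Icc 1 T, ‖g t‖ ^ 2) / (1 - β1)) / √(1 - β2) := by
        gcongr
    _ = √(1 + Real.log T) / (√(1 - β1) * √(1 - β2)) * √(∑ t ∈ Finset.Icc 1 T, ‖g t‖ ^ 2) := by
        rw [Real.sqrt_div' _ one_sub_β1_pos.le]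
        ring

/-- For the AdaMomentum recursions with `0 < β_{1,t} ≤ β₁ < 1`,
`β₂ ∈ (0,1)`, `ε ≥ 0` and `γ := β₁/√β₂ < 1`, for every coordinate `i`,
`Σ_{t=1}^T m_{t,i}²/√(t v_{t,i}) ≤ (√(1+log T)/((1−β₁)²(1−γ)√(1−β₂))) ‖g_{1:T,i}‖₂`
(terms with `v_{t,i} = 0` are `0`, which is automatic since division by `0` is `0`). -/
theorem adamomentum_key_sum_bound
    (d T : ℕ) (g : ℕ → Fin d → ℝ) (β1 β2 ε : ℝ)
    (β1t : ℕ → ℝ) (hβ1t : ∀ t, 1 ≤ t → 0 < β1t t ∧ β1t t ≤ β1) (hβ1 : β1 < 1)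
    (hβ2 : 0 < β2 ∧ β2 < 1) (hε : 0 ≤ ε)
    (m v : ℕ → Fin d → ℝ) (hm0 : m 0 = 0) (hv0 : v 0 = 0)
    (hm : ∀ t i, m (t + 1) i = β1t (t + 1) * m t i + (1 - β1t (t + 1)) * g (t + 1) i)
    (hv : ∀ t i, v (t + 1) i = β2 * v t i + (1 - β2) * (m (t + 1) i) ^ 2 + ε)
    (hγ : β1 / Real.sqrt β2 < 1) (i : Fin d) :
    ∑ t ∈ Finset.Icc 1 T, (m t i) ^ 2 / Real.sqrt (t * v t i)
      ≤ Real.sqrt (1 + Real.log T)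
          / ((1 - β1) ^ 2 * (1 - β1 / Real.sqrt β2) * Real.sqrt (1 - β2))
        * Real.sqrt (∑ t ∈ Finset.Icc 1 T, (g t i) ^ 2) := by
  have hβ1₀ : 0 ≤ β1 := (hβ1t 1 le_rfl).1.le.trans (hβ1t 1 le_rfl).2
  refine le_trans ?_ (mul_le_mul_of_nonneg_right (div_sqrt_one_sub_mul_le_div_sq_mul
    (Real.sqrt_nonneg _) hβ1₀ hβ1 (by positivity) hγ (Real.sqrt_pos.2 (sub_pos.2 hβ2.2)))
    (Real.sqrt_nonneg _))
  simpa only [Real.norm_eq_abs, sq_abs] using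
    adamomentum_key_sum_bound_general T (g := (g · i)) (m := (m · i)) (v := (v · i))
      (fun t ht => (hβ1t t ht).imp_left le_of_lt) hβ1 (hβ2.imp_left le_of_lt) hε
      (congrFun hm0 i) (congrFun hv0 i) (hm · i) (by simpa using (hv · i))
end

section
/- Let f : ℝ^d → ℝ be differentiable with L-Lipschitz gradient. Let θ, m ∈ ℝ^d, α > 0, and v ∈ ℝ^d with v_i > 0 for all i, and suppose there are constants 0 < b_l ≤ b_u such that b_l ≤ 1/√(v_i) ≤ b_u for every coordinate i. Define θ' = θ − α m/√v (elementwise division). Then f(θ') ≤ f(θ) + (α b_u/2) ‖∇f(θ) − m‖_2² + ((L α² b_u² − α b_l)/2) ‖m‖_2² − (α b_l/2) ‖∇f(θ)‖_2². -/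
/-!
Along the segment from `θ` to `θ'`, a Lipschitz gradient bounds `f θ'` by its first-order model at
`θ` plus `L / 2 * ‖θ' - θ‖ ^ 2`. The step is `θ' = θ - α • S m` with `S = diag (1 / √v)`, and the
only properties of `S` that matter are symmetry and the bounds `bl ≤ S` and `‖S‖ ≤ bu`. By symmetry,
with `g` the gradient at `θ`,
`2 * ⟪S m, g⟫ = ⟪S m, m⟫ + ⟪S g, g⟫ - ⟪S (g - m), g - m⟫`;
bounding the first two terms from below by `bl` and the last one from above by `bu` turns the
first-order term into the three squared norms.
-/

open Matrix Set

section DescentLemma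

variable {E : Type*} [NormedAddCommGroup E] [InnerProductSpace ℝ E] [CompleteSpace E]

theorem hasDerivAt_comp_lineMap_of_hasGradientAt {f : E → ℝ} {g x y : E} {t : ℝ}
    (hf : HasGradientAt f g (AffineMap.lineMap x y t)) :
    HasDerivAt (fun t : ℝ ↦ f (AffineMap.lineMap x y t)) (inner ℝ g (y - x)) t := by
  simpa [Function.comp_def] using
    hf.hasFDerivAt.comp_hasDerivAt t AffineMap.hasDerivAt_lineMap

theorem le_add_inner_add_norm_sq_of_gradient_lipschitz {f : E → ℝ} {f' : E → E} {L : ℝ} {x y : E}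
    (hgrad : ∀ z ∈ segment ℝ x y, HasGradientAt f (f' z) z)
    (hLip : ∀ z ∈ segment ℝ x y, ‖f' z - f' x‖ ≤ L * ‖z - x‖) :
    f y ≤ f x + inner ℝ (f' x) (y - x) + L / 2 * ‖y - x‖ ^ 2 := by
  let γ : ℝ → E := AffineMap.lineMap x y
  have γ_mem (t : ℝ) (ht : t ∈ Icc 0 1) : γ t ∈ segment ℝ x y :=
    segment_eq_image_lineMap ℝ x y ▸ mem_image_of_mem _ ht
  have hasDerivAt_f (t : ℝ) (ht : t ∈ Icc 0 1) :
      HasDerivAt (fun t ↦ f (γ t)) (inner ℝ (f' (γ t)) (y - x)) t :=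
    hasDerivAt_comp_lineMap_of_hasGradientAt (hgrad _ (γ_mem t ht))
  have hasDerivAt_model (t : ℝ) :
      HasDerivAt (fun t ↦ f x + t * inner ℝ (f' x) (y - x) + L / 2 * ‖y - x‖ ^ 2 * t ^ 2)
        (inner ℝ (f' x) (y - x) + L * ‖y - x‖ ^ 2 * t) t := by
    refine ((((hasDerivAt_id t).mul_const (inner ℝ (f' x) (y - x))).const_add (f x)).add
      ((hasDerivAt_pow 2 t).const_mul (L / 2 * ‖y - x‖ ^ 2))).congr_deriv ?_
    push_cast
    ring
  have deriv_le (t : ℝ) (ht : t ∈ Icc 0 1) :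
      inner ℝ (f' (γ t)) (y - x) ≤ inner ℝ (f' x) (y - x) + L * ‖y - x‖ ^ 2 * t := by
    have norm_γ_sub : ‖γ t - x‖ = t * ‖y - x‖ := by
      simp [γ, AffineMap.lineMap_apply, norm_smul, abs_of_nonneg ht.1]
    rw [← sub_le_iff_le_add', ← inner_sub_left]
    calc inner ℝ (f' (γ t) - f' x) (y - x)
        ≤ ‖f' (γ t) - f' x‖ * ‖y - x‖ := real_inner_le_norm _ _
      _ ≤ L * ‖γ t - x‖ * ‖y - x‖ := by gcongr; exact hLip _ (γ_mem t ht)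
      _ = L * ‖y - x‖ ^ 2 * t := by rw [norm_γ_sub]; ring
  have f_le_model := image_le_of_deriv_right_le_deriv_boundary
    (fun t ht ↦ (hasDerivAt_f t ht).continuousAt.continuousWithinAt)
    (fun t ht ↦ (hasDerivAt_f t (Ico_subset_Icc_self ht)).hasDerivWithinAt)
    (by simp [γ]) (fun t _ ↦ (hasDerivAt_model t).continuousAt.continuousWithinAt)
    (fun t _ ↦ (hasDerivAt_model t).hasDerivWithinAt)
    (fun t ht ↦ deriv_le t (Ico_subset_Icc_self ht)) (right_mem_Icc.2 zero_le_one)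
  simpa [γ] using f_le_model

end DescentLemma

section SymmetricOperator

variable {E : Type*} [NormedAddCommGroup E] [InnerProductSpace ℝ E] {S : E →ₗ[ℝ] E}

theorem two_mul_inner_map_eq_of_isSymmetric (hS : S.IsSymmetric) (x y : E) :
    2 * inner ℝ (S x) y
      = inner ℝ (S x) x + inner ℝ (S y) y - inner ℝ (S (y - x)) (y - x) := by
  have inner_swap : inner ℝ (S y) x = inner ℝ (S x) y := by rw [hS, real_inner_comm]
  simp only [map_sub, inner_sub_left, inner_sub_right, inner_swap]
  ring

theorem real_inner_le_mul_norm_sq_of_norm_le {c : ℝ} {x y : E} (h : ‖x‖ ≤ c * ‖y‖) :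
    inner ℝ x y ≤ c * ‖y‖ ^ 2 :=
  calc inner ℝ x y ≤ ‖x‖ * ‖y‖ := real_inner_le_norm _ _
    _ ≤ c * ‖y‖ * ‖y‖ := by gcongr
    _ = c * ‖y‖ ^ 2 := by ring

theorem le_two_mul_inner_map_of_isSymmetric {a b : ℝ} (hS : S.IsSymmetric)
    (ha : ∀ x, a * ‖x‖ ^ 2 ≤ inner ℝ (S x) x) (hb : ∀ x, ‖S x‖ ≤ b * ‖x‖) (x y : E) :
    a * ‖x‖ ^ 2 + a * ‖y‖ ^ 2 - b * ‖y - x‖ ^ 2 ≤ 2 * inner ℝ (S x) y := by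
  rw [two_mul_inner_map_eq_of_isSymmetric hS]
  gcongr
  exacts [ha x, ha y, real_inner_le_mul_norm_sq_of_norm_le (hb _)]

end SymmetricOperator

section DiagonalOperator

variable {ι : Type*} [Fintype ι] [DecidableEq ι] {𝕜 : Type*} [RCLike 𝕜]

theorem toEuclideanLin_diagonal_apply (s : ι → 𝕜) (x : EuclideanSpace 𝕜 ι) (i : ι) :
    toEuclideanLin (diagonal s) x i = s i * x i :=
  mulVec_diagonal s x i

open scoped Matrix.Norms.L2Operator in
theorem norm_toEuclideanLin_diagonal_le {s : ι → 𝕜} {c : ℝ} (hc : 0 ≤ c)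
    (hs : ∀ i, ‖s i‖ ≤ c) (x : EuclideanSpace 𝕜 ι) :
    ‖toEuclideanLin (diagonal s) x‖ ≤ c * ‖x‖ :=
  calc ‖toEuclideanLin (diagonal s) x‖ ≤ ‖diagonal s‖ * ‖x‖ := l2_opNorm_mulVec _ x
    _ ≤ c * ‖x‖ := by
      gcongr
      exact (l2_opNorm_diagonal s).trans_le ((pi_norm_le_iff_of_nonneg hc).2 hs)

theorem mul_norm_sq_le_inner_toEuclideanLin_diagonal {s : ι → ℝ} {c : ℝ} (hs : ∀ i, c ≤ s i)
    (x : EuclideanSpace ℝ ι) :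
    c * ‖x‖ ^ 2 ≤ inner ℝ (toEuclideanLin (diagonal s) x) x :=
  calc c * ‖x‖ ^ 2 = ∑ i, c * x i ^ 2 := by
        rw [EuclideanSpace.real_norm_sq_eq, Finset.mul_sum]
    _ ≤ ∑ i, s i * x i ^ 2 := by gcongr with i; exact hs i
    _ = inner ℝ (toEuclideanLin (diagonal s) x) x := by
        rw [PiLp.inner_apply]
        refine Finset.sum_congr rfl fun i _ ↦ ?_
        rw [toEuclideanLin_diagonal_apply, RCLike.inner_apply, conj_trivial]
        ring

end DiagonalOperator

theorem nonneg_of_forall_norm_sub_le_mul {E F : Type*} [NormedAddCommGroup E] [Nontrivial E]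
    [SeminormedAddCommGroup F] {g : E → F} {L : ℝ}
    (hLip : ∀ x y, ‖g x - g y‖ ≤ L * ‖x - y‖) : 0 ≤ L := by
  obtain ⟨x, y, hxy⟩ := exists_pair_ne E
  exact nonneg_of_mul_nonneg_left ((norm_nonneg _).trans (hLip x y)) (norm_sub_pos_iff.2 hxy)

theorem adamomentum_descent_step_general {E : Type*} [NormedAddCommGroup E]
    [InnerProductSpace ℝ E] [CompleteSpace E] {f : E → ℝ} {f' : E → E}
    (hgrad : ∀ x, HasGradientAt f (f' x) x)
    {L : ℝ} (hLip : ∀ x y, ‖f' x - f' y‖ ≤ L * ‖x - y‖)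
    {S : E →ₗ[ℝ] E} (hS : S.IsSymmetric)
    {bl bu : ℝ} (hbl : ∀ x, bl * ‖x‖ ^ 2 ≤ inner ℝ (S x) x) (hbu : ∀ x, ‖S x‖ ≤ bu * ‖x‖)
    {α : ℝ} (hα : 0 ≤ α) (θ m : E) :
    f (θ - α • S m) ≤ f θ + α * bu / 2 * ‖f' θ - m‖ ^ 2
        + (L * α ^ 2 * bu ^ 2 - α * bl) / 2 * ‖m‖ ^ 2
        - α * bl / 2 * ‖f' θ‖ ^ 2 := by
  -- A negative `L` is possible only on the trivial space.
  rcases subsingleton_or_nontrivial E with _ | _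
  · simp [Subsingleton.eq_zero (α := E)]
  have L_nonneg : 0 ≤ L := nonneg_of_forall_norm_sub_le_mul hLip
  have first_order : inner ℝ (f' θ) (-(α • S m))
      ≤ -(α / 2 * (bl * ‖m‖ ^ 2 + bl * ‖f' θ‖ ^ 2 - bu * ‖f' θ - m‖ ^ 2)) := by
    rw [inner_neg_right, real_inner_smul_right, real_inner_comm]
    linear_combination α / 2 * le_two_mul_inner_map_of_isSymmetric hS hbl hbu m (f' θ)
  have second_order : L / 2 * ‖-(α • S m)‖ ^ 2 ≤ L / 2 * (α * (bu * ‖m‖)) ^ 2 := by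
    rw [norm_neg, norm_smul, Real.norm_of_nonneg hα]
    gcongr
    exact hbu m
  have descent := le_add_inner_add_norm_sq_of_gradient_lipschitz (y := θ - α • S m)
    (fun z _ ↦ hgrad z) (fun z _ ↦ hLip z θ)
  rw [sub_sub_cancel_left] at descent
  linarith

/-- Descent step for AdaMomentum. If `f` is differentiable with
`L`-Lipschitz gradient, `0 < b_l ≤ 1/√(v_i) ≤ b_u`, and
`θ' = θ − α m/√v` elementwise with `α > 0`, then
`f(θ') ≤ f(θ) + (α b_u/2)‖∇f(θ) − m‖² + ((Lα²b_u² − αb_l)/2)‖m‖² − (αb_l/2)‖∇f(θ)‖²`. -/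
theorem adamomentum_descent_step
    (d : ℕ) (f : EuclideanSpace ℝ (Fin d) → ℝ)
    (f' : EuclideanSpace ℝ (Fin d) → EuclideanSpace ℝ (Fin d))
    (hgrad : ∀ x, HasGradientAt f (f' x) x)
    (L : ℝ) (hLip : ∀ x y, ‖f' x - f' y‖ ≤ L * ‖x - y‖)
    (θ m θ' : EuclideanSpace ℝ (Fin d)) (α : ℝ) (hα : 0 < α)
    (v : Fin d → ℝ) (hv : ∀ i, 0 < v i)
    (bl bu : ℝ) (hbl : 0 < bl) (hblu : bl ≤ bu)
    (hb : ∀ i, bl ≤ 1 / Real.sqrt (v i) ∧ 1 / Real.sqrt (v i) ≤ bu)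
    (hθ' : ∀ i, θ' i = θ i - α * m i / Real.sqrt (v i)) :
    f θ' ≤ f θ + α * bu / 2 * ‖f' θ - m‖ ^ 2
        + (L * α ^ 2 * bu ^ 2 - α * bl) / 2 * ‖m‖ ^ 2
        - α * bl / 2 * ‖f' θ‖ ^ 2 := by
  have hθ'_eq : θ' = θ - α • toEuclideanLin (diagonal fun i ↦ 1 / √(v i)) m := by
    ext i
    rw [hθ', PiLp.sub_apply, PiLp.smul_apply, toEuclideanLin_diagonal_apply, smul_eq_mul]
    ring
  have norm_le (i : Fin d) : ‖1 / √(v i)‖ ≤ bu :=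
    (Real.norm_of_nonneg (by positivity)).trans_le (hb i).2
  exact hθ'_eq ▸ adamomentum_descent_step_general hgrad hLip
    (isSymmetric_toEuclideanLin_iff.2 (isHermitian_diagonal _))
    (mul_norm_sq_le_inner_toEuclideanLin_diagonal fun i ↦ (hb i).1)
    (norm_toEuclideanLin_diagonal_le (hbl.le.trans hblu) norm_le) hα.le θ m
end
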